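/- arXiv:1501.04354 — 2 statements merged into one kernel-verified Lean document; each statement's English description precedes it below -/
import Mathlib

section
/- Suppose mul : ℕ → Stream' ℕ → Stream' ℕ satisfies mul k (y :: t) = (k * y) :: mul k t for all k, y, t, and mg : Stream' ℕ → Stream' ℕ → Stream' ℕ satisfies mg (x :: t₁) (y :: t₂) = (if x ≤ y then x :: mg t₁ (y :: t₂) else y :: mg (x :: t₁) t₂) for all x, y, t₁, t₂. Then there exists exactly one stream H : Stream' ℕ such that H = 1 :: mg (mg (mul 2 H) (mul 3 H)) (mul 5 H). -/
/-- Two streams agree on their first `n` entries. -/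
def AgreeUpTo {A : Type*} (n : ℕ) (s t : Stream' A) : Prop :=
  ∀ i < n, s.get i = t.get i

namespace AgreeUpTo

variable {A : Type*} {n m : ℕ} {s t : Stream' A}

theorem mono (h : AgreeUpTo n s t) (hm : m ≤ n) : AgreeUpTo m s t :=
  fun i hi => h i (hi.trans_le hm)

theorem tail (h : AgreeUpTo (n + 1) s t) : AgreeUpTo n s.tail t.tail :=
  fun i hi => h (i + 1) (Nat.succ_lt_succ hi)

theorem cons (x : A) (h : AgreeUpTo n s t) :
    AgreeUpTo (n + 1) (Stream'.cons x s) (Stream'.cons x t)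
  | 0, _ => rfl
  | i + 1, hi => h i (Nat.lt_of_succ_lt_succ hi)

end AgreeUpTo

theorem agreeUpTo_iterate {A : Type*} {F : Stream' A → Stream' A}
    (hF : ∀ n s t, AgreeUpTo n s t → AgreeUpTo (n + 1) (F s) (F t))
    (n : ℕ) (s t : Stream' A) : AgreeUpTo n (F^[n] s) (F^[n] t) := by
  induction n with
  | zero => intro i hi; omega
  | succ n ih =>
    rw [Function.iterate_succ_apply', Function.iterate_succ_apply']
    exact hF n _ _ ih

/-- A productive (guarded) operator on streams has exactly one fixed point. -/
theorem existsUnique_fixedPoint_of_productive {A : Type*} [Nonempty A]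
    {F : Stream' A → Stream' A}
    (hF : ∀ n s t, AgreeUpTo n s t → AgreeUpTo (n + 1) (F s) (F t)) :
    ∃! H : Stream' A, H = F H := by
  obtain ⟨a⟩ := ‹Nonempty A›
  let c : Stream' A := Stream'.const a
  let H : Stream' A := fun n => (F^[n + 1] c).get n
  have approx (n : ℕ) : AgreeUpTo n H (F^[n] c) := by
    intro i hi
    obtain ⟨k, rfl⟩ := Nat.exists_eq_add_of_lt hi
    rw [show i + k + 1 = i + 1 + k by omega, Function.iterate_add_apply]
    exact agreeUpTo_iterate hF (i + 1) _ _ i i.lt_succ_self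
  refine ⟨H, Stream'.ext fun n => ?_, fun K hK => Stream'.ext fun n => ?_⟩
  · have h := hF n _ _ (approx n) n n.lt_succ_self
    rw [← Function.iterate_succ_apply' F] at h
    exact h.symm
  · have h := agreeUpTo_iterate hF (n + 1) K c n n.lt_succ_self
    rwa [Function.iterate_fixed hK.symm] at h

theorem agreeUpTo_mul {mul : ℕ → Stream' ℕ → Stream' ℕ}
    (hmul : ∀ (k y : ℕ) (t : Stream' ℕ),
      mul k (Stream'.cons y t) = Stream'.cons (k * y) (mul k t))
    (k n : ℕ) {s t : Stream' ℕ} (h : AgreeUpTo n s t) :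
    AgreeUpTo n (mul k s) (mul k t) := by
  induction n generalizing s t with
  | zero => intro i hi; omega
  | succ n ih =>
    rw [← Stream'.eta s, ← Stream'.eta t, hmul, hmul,
      show s.head = t.head from h 0 n.succ_pos]
    exact (ih h.tail).cons _

theorem agreeUpTo_merge {mg : Stream' ℕ → Stream' ℕ → Stream' ℕ}
    (hmg : ∀ (x y : ℕ) (t₁ t₂ : Stream' ℕ),
      mg (Stream'.cons x t₁) (Stream'.cons y t₂) =
        (if x ≤ y then Stream'.cons x (mg t₁ (Stream'.cons y t₂))
         else Stream'.cons y (mg (Stream'.cons x t₁) t₂)))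
    (n : ℕ) {s s' t t' : Stream' ℕ} (hs : AgreeUpTo n s s') (ht : AgreeUpTo n t t') :
    AgreeUpTo n (mg s t) (mg s' t') := by
  induction n generalizing s s' t t' with
  | zero => intro i hi; omega
  | succ n ih =>
    have unfold_mg (u v : Stream' ℕ) : mg u v =
        if u.head ≤ v.head then Stream'.cons u.head (mg u.tail v)
        else Stream'.cons v.head (mg u v.tail) := by
      simpa only [Stream'.eta] using hmg u.head v.head u.tail v.tail
    rw [unfold_mg s t, unfold_mg s' t', show s.head = s'.head from hs 0 n.succ_pos,
      show t.head = t'.head from ht 0 n.succ_pos]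
    split_ifs
    · exact (ih hs.tail (ht.mono n.le_succ)).cons _
    · exact (ih (hs.mono n.le_succ) ht.tail).cons _

/-- The paper's corecursive specification of the Hamming stream `H`:
`H = 1 :: merge (merge (mul 2 H) (mul 3 H)) (mul 5 H)` has exactly one solution. -/
theorem stmt5 (mul : ℕ → Stream' ℕ → Stream' ℕ)
    (hmul : ∀ (k y : ℕ) (t : Stream' ℕ),
      mul k (Stream'.cons y t) = Stream'.cons (k * y) (mul k t))
    (mg : Stream' ℕ → Stream' ℕ → Stream' ℕ)
    (hmg : ∀ (x y : ℕ) (t₁ t₂ : Stream' ℕ),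
      mg (Stream'.cons x t₁) (Stream'.cons y t₂) =
        (if x ≤ y then Stream'.cons x (mg t₁ (Stream'.cons y t₂))
         else Stream'.cons y (mg (Stream'.cons x t₁) t₂))) :
    ∃! H : Stream' ℕ,
      H = Stream'.cons 1 (mg (mg (mul 2 H) (mul 3 H)) (mul 5 H)) := by
  refine existsUnique_fixedPoint_of_productive
    (F := fun H => Stream'.cons 1 (mg (mg (mul 2 H) (mul 3 H)) (mul 5 H)))
    fun n s t h => AgreeUpTo.cons 1 ?_
  exact agreeUpTo_merge hmg n
    (agreeUpTo_merge hmg n (agreeUpTo_mul hmul 2 n h) (agreeUpTo_mul hmul 3 n h))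
    (agreeUpTo_mul hmul 5 n h)
end

section
/- Let A be a partial order with least element and B a CPO, i.e., a partial order with least element in which every nonempty directed subset has a least upper bound. Let F : (A → B) → (A → B) be monotone with respect to the pointwise order, and suppose that F g is a monotone function whenever g : A → B is monotone. If f₀ : A → B is a least fixpoint of F (i.e., F f₀ = f₀ and f₀ ≤ g pointwise for every g with F g = g), then f₀ is monotone. -/
/-- If `F` on the pointwise-ordered function space `A → B` (with `B` a CPO) is
monotone and maps monotone functions to monotone functions, then its least
fixpoint is monotone. -/
theorem stmt11 {A B : Type*} [PartialOrder A] [OrderBot A]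
    [CompletePartialOrder B] [OrderBot B]
    (F : (A → B) → (A → B)) (hF : Monotone F)
    (hmono : ∀ g : A → B, Monotone g → Monotone (F g))
    (f₀ : A → B) (hfix : F f₀ = f₀) (hleast : ∀ g : A → B, F g = g → f₀ ≤ g) :
    Monotone f₀ := by
  -- A maximal monotone post-fixpoint below `f₀` is a fixpoint, hence equal to `f₀`.
  obtain ⟨g, ⟨hg, hgF, hgf⟩, hmax⟩ :=
      zorn_le₀ {g : A → B | Monotone g ∧ g ≤ F g ∧ g ≤ f₀} fun c hc hchain ↦ by
    have hdir (a : A) : DirectedOn (· ≤ ·) ((fun g : A → B ↦ g a) '' c) := by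
      rintro _ ⟨g, hg, rfl⟩ _ ⟨h, hh, rfl⟩
      obtain ⟨k, hk, hgk, hhk⟩ := hchain.directedOn g hg h hh
      exact ⟨k a, ⟨k, hk, rfl⟩, hgk a, hhk a⟩
    let s : A → B := fun a ↦ sSup ((fun g : A → B ↦ g a) '' c)
    have hle : ∀ g ∈ c, g ≤ s := fun g hg a ↦ (hdir a).le_sSup ⟨g, hg, rfl⟩
    have hsup (a : A) (b : B) (h : ∀ g ∈ c, g a ≤ b) : s a ≤ b :=
      (hdir a).sSup_le (Set.forall_mem_image.2 h)
    exact ⟨s, ⟨fun x y hxy ↦ hsup x _ fun g hg ↦ ((hc hg).1 hxy).trans (hle g hg y),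
      fun a ↦ hsup a _ fun g hg ↦ ((hc hg).2.1 a).trans (hF (hle g hg) a),
      fun a ↦ hsup a _ fun g hg ↦ (hc hg).2.2 a⟩, hle⟩
  have hFg : F g ≤ g :=
    hmax ⟨hmono g hg, hF hgF, (hF hgf).trans hfix.le⟩ hgF
  rwa [(hleast g (hFg.antisymm hgF)).antisymm hgf]
end
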